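/- For every integer b ≥ 2 and every integer k with 1 ≤ k ≤ b − 1, every subsequential limit of the sequence (P_{b,N}(k))_{N=1}^{∞} lies in the closed interval [1/(k(b − 1)), b/((k+1)(b − 1))]. -/

import Mathlib

/-- The leading digit of `x` in base `b`: `⌊x / b^⌊log_b x⌋⌋`. -/
def leadingDigit (b x : ℕ) : ℕ := x / b ^ Nat.log b x

/-- `P b N k` is the frequency of leading digit `k` among `1, …, N` in base `b`. -/
noncomputable def leadingDigitFreq (b N k : ℕ) : ℝ :=
  (((Finset.Icc 1 N).filter (fun x => leadingDigit b x = k)).card : ℝ) / N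

/-!
In the block `[b ^ m, b ^ (m + 1))` the numbers with leading digit `k` form the interval
`[k * b ^ m, (k + 1) * b ^ m)`. Summing over complete blocks gives the number `C` of `x < n` with
leading digit `k` up to a truncated last block, in the form `(b - 1) * C + 1 = p + (b - 1) * t` with
`p = b ^ m` and `0 ≤ t ≤ p`. The ratio of `(b - 1) * C + 1` to `n` is smallest at `n = k * p`, where
`t = 0`, and largest at `n = (k + 1) * p`, where `t = p`; its values there are `1 / k` and
`b / (k + 1)`. Dividing by `b - 1` gives the two endpoints, with an error `O(1 / n)`.
-/

open Filter Finset Topology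

theorem card_filter_Ico_consecutive {α : Type*} [LinearOrder α] [LocallyFiniteOrder α]
    (p : α → Prop) [DecidablePred p] {a b c : α} (hab : a ≤ b) (hbc : b ≤ c) :
    #{x ∈ Ico a b | p x} + #{x ∈ Ico b c | p x} = #{x ∈ Ico a c | p x} := by
  rw [← Ico_union_Ico_eq_Ico hab hbc, filter_union, card_union_of_disjoint]
  exact disjoint_filter_filter (Ico_disjoint_Ico_consecutive a b c)

/-- The number of positive integers below `n` with leading digit `k` in base `b`. The bound is
strict so that `n = b ^ m` corresponds to complete blocks; the frequency among `1, …, N` involves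
the count at `n = N + 1`. -/
def leadingDigitCount (b k n : ℕ) : ℕ := #{x ∈ Ico 1 n | leadingDigit b x = k}

section Count

variable {b k m n : ℕ}

theorem leadingDigit_eq_iff {x : ℕ} (hl : b ^ m ≤ x) (hu : x < b ^ (m + 1)) :
    leadingDigit b x = k ↔ k * b ^ m ≤ x ∧ x < (k + 1) * b ^ m := by
  have hpos : 0 < b ^ m := Nat.pos_of_mul_pos_right (pow_succ b m ▸ Nat.zero_lt_of_lt hu)
  rw [leadingDigit, Nat.log_eq_of_pow_le_of_lt_pow hl hu, ← Nat.le_div_iff_mul_le hpos,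
    ← Nat.div_lt_iff_lt_mul hpos]
  omega

theorem filter_leadingDigit_Ico_pow (hk : 1 ≤ k) (hn : n ≤ b ^ (m + 1)) :
    {x ∈ Ico (b ^ m) n | leadingDigit b x = k} =
      Ico (k * b ^ m) (min n ((k + 1) * b ^ m)) := by
  ext x
  simp only [mem_filter, mem_Ico, lt_min_iff]
  constructor
  · rintro ⟨⟨hl, hu⟩, hx⟩
    have := (leadingDigit_eq_iff hl (hu.trans_le hn)).1 hx
    exact ⟨this.1, hu, this.2⟩
  · rintro ⟨hkl, hu, hku⟩
    have hl : b ^ m ≤ x := (Nat.le_mul_of_pos_left _ hk).trans hkl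
    exact ⟨⟨hl, hu⟩, (leadingDigit_eq_iff hl (hu.trans_le hn)).2 ⟨hkl, hku⟩⟩

-- The truncated subtraction is intended: the last block contributes nothing while `n ≤ k * b ^ m`.
theorem leadingDigitCount_eq_add (hb : 0 < b) (hk : 1 ≤ k) (hl : b ^ m ≤ n)
    (hu : n ≤ b ^ (m + 1)) :
    leadingDigitCount b k n =
      leadingDigitCount b k (b ^ m) + (min n ((k + 1) * b ^ m) - k * b ^ m) := by
  rw [leadingDigitCount, ← card_filter_Ico_consecutive _ (Nat.one_le_pow m b hb) hl,
    filter_leadingDigit_Ico_pow hk hu, Nat.card_Ico, leadingDigitCount]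

theorem leadingDigitCount_pow (hk : 1 ≤ k) (hkb : k < b) (m : ℕ) :
    leadingDigitCount b k (b ^ m) = ∑ i ∈ range m, b ^ i := by
  have hb : 0 < b := Nat.zero_lt_of_lt hkb
  induction m with
  | zero => simp [leadingDigitCount]
  | succ m ih =>
    have hblock : (k + 1) * b ^ m ≤ b ^ (m + 1) := by
      rw [pow_succ']
      exact Nat.mul_le_mul_right _ hkb
    rw [leadingDigitCount_eq_add hb hk (Nat.pow_le_pow_right hb m.le_succ) le_rfl, ih,
      sum_range_succ, min_eq_right hblock, add_one_mul, Nat.add_sub_cancel_left]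

theorem sub_one_mul_leadingDigitCount_add_one (hk : 1 ≤ k) (hkb : k < b) (hl : b ^ m ≤ n)
    (hu : n ≤ b ^ (m + 1)) :
    ((b : ℝ) - 1) * leadingDigitCount b k n + 1 =
      (b : ℝ) ^ m + (b - 1) * (min n ((k + 1) * b ^ m) - k * b ^ m : ℕ) := by
  rw [leadingDigitCount_eq_add (Nat.zero_lt_of_lt hkb) hk hl hu, leadingDigitCount_pow hk hkb]
  push_cast
  linear_combination mul_geom_sum (b : ℝ) m

theorem le_mul_leadingDigitCount (hk : 1 ≤ k) (hkb : k < b) (hn : 1 ≤ n) :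
    (n : ℝ) ≤ k * (((b : ℝ) - 1) * leadingDigitCount b k n + 1) := by
  obtain ⟨m, hl, hu⟩ := exists_nat_pow_near hn (hk.trans_lt hkb)
  rw [sub_one_mul_leadingDigitCount_add_one hk hkb hl hu.le]
  set t := min n ((k + 1) * b ^ m) - k * b ^ m with ht
  have hk' : (1 : ℝ) ≤ k := mod_cast hk
  have hb : (1 : ℝ) ≤ b - 1 := by
    rw [le_sub_iff_add_le]
    exact_mod_cast (by omega : 1 + 1 ≤ b)
  have hcases : n ≤ k * b ^ m + t ∨ b ^ m ≤ t := by
    rw [add_one_mul] at ht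
    omega
  rcases hcases with hn_le | hpt
  · calc (n : ℝ) ≤ k * b ^ m + t := mod_cast hn_le
      _ ≤ k * b ^ m + k * (b - 1) * t := by
        gcongr
        exact le_mul_of_one_le_left t.cast_nonneg (one_le_mul_of_one_le_of_one_le hk' hb)
      _ = k * (b ^ m + (b - 1) * t) := by ring
  · have hpt' : (b : ℝ) ^ m ≤ t := mod_cast hpt
    calc (n : ℝ) ≤ b ^ (m + 1) := mod_cast hu.le
      _ ≤ k * b ^ (m + 1) := le_mul_of_one_le_left (by positivity) hk'
      _ = k * (b ^ m + (b - 1) * b ^ m) := by ring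
      _ ≤ k * (b ^ m + (b - 1) * t) := by gcongr

theorem mul_leadingDigitCount_le (hk : 1 ≤ k) (hkb : k < b) (hn : 1 ≤ n) :
    ((k : ℝ) + 1) * (((b : ℝ) - 1) * leadingDigitCount b k n + 1) ≤ b * n := by
  obtain ⟨m, hl, hu⟩ := exists_nat_pow_near hn (hk.trans_lt hkb)
  rw [sub_one_mul_leadingDigitCount_add_one hk hkb hl hu.le]
  set t := min n ((k + 1) * b ^ m) - k * b ^ m with ht
  have hk' : (1 : ℝ) ≤ k := mod_cast hk
  have hkb' : (k : ℝ) + 1 ≤ b := mod_cast hkb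
  have hcases : t = 0 ∨ k * b ^ m + t ≤ n ∧ t ≤ b ^ m := by
    rw [add_one_mul] at ht
    omega
  rcases hcases with ht_zero | ⟨hn_ge, htp⟩
  · calc ((k : ℝ) + 1) * (b ^ m + (b - 1) * t) = (k + 1) * b ^ m := by simp [ht_zero]
      _ ≤ b * n := by
        gcongr
        exact_mod_cast hl
  · have htp' : (0 : ℝ) ≤ b ^ m - t := sub_nonneg.2 (mod_cast htp)
    have hcoeff : (0 : ℝ) ≤ k * (b - 1) - 1 :=
      sub_nonneg.2 (one_le_mul_of_one_le_of_one_le hk' (by linarith))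
    calc ((k : ℝ) + 1) * (b ^ m + (b - 1) * t)
        ≤ (k + 1) * (b ^ m + (b - 1) * t) + (k * (b - 1) - 1) * (b ^ m - t) :=
          le_add_of_nonneg_right (mul_nonneg hcoeff htp')
      _ = b * (k * b ^ m + t) := by ring
      _ ≤ b * n := by
        gcongr
        exact_mod_cast hn_ge

end Count

section Freq

variable {b k N : ℕ}

theorem leadingDigitFreq_eq_leadingDigitCount_div (b k N : ℕ) :
    leadingDigitFreq b N k = leadingDigitCount b k (N + 1) / N :=
  rfl

theorem le_leadingDigitFreq_add (hk : 1 ≤ k) (hkb : k < b) (hN : 1 ≤ N) :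
    1 / ((k : ℝ) * ((b : ℝ) - 1)) ≤ leadingDigitFreq b N k + 1 / N := by
  have hcount := le_mul_leadingDigitCount hk hkb N.succ_pos
  have hk' : (1 : ℝ) ≤ k := mod_cast hk
  have hb : (k : ℝ) + 1 ≤ b := mod_cast hkb
  have hN' : (0 : ℝ) < N := mod_cast hN
  have hden : (0 : ℝ) < k * (b - 1) := mul_pos (by linarith) (by linarith)
  rw [leadingDigitFreq_eq_leadingDigitCount_div, ← add_div, div_le_div_iff₀ hden hN']
  push_cast at hcount
  have hslack : (k : ℝ) ≤ k * (b - 1) := le_mul_of_one_le_right k.cast_nonneg (by linarith)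
  linarith

theorem leadingDigitFreq_le_add (hk : 1 ≤ k) (hkb : k < b) (hN : 1 ≤ N) :
    leadingDigitFreq b N k ≤ (b : ℝ) / (((k : ℝ) + 1) * ((b : ℝ) - 1)) + 1 / N := by
  have hcount := mul_leadingDigitCount_le hk hkb N.succ_pos
  have hk' : (1 : ℝ) ≤ k := mod_cast hk
  have hb : (k : ℝ) + 1 ≤ b := mod_cast hkb
  have hN' : (0 : ℝ) < N := mod_cast hN
  have hden : (0 : ℝ) < (k + 1) * (b - 1) := mul_pos (by linarith) (by linarith)
  rw [leadingDigitFreq_eq_leadingDigitCount_div, ← sub_le_iff_le_add, ← sub_div,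
    div_le_div_iff₀ hN' hden]
  push_cast at hcount
  have hslack : (0 : ℝ) ≤ k * b := by positivity
  linarith

end Freq

theorem subseq_limits_mem_Icc (b k : ℕ) (hb : 2 ≤ b) (hk1 : 1 ≤ k) (hk2 : k ≤ b - 1)
    (φ : ℕ → ℕ) (hφ : StrictMono φ) (L : ℝ)
    (hL : Filter.Tendsto (fun n : ℕ => leadingDigitFreq b (φ n) k) Filter.atTop (nhds L)) :
    L ∈ Set.Icc (1 / ((k : ℝ) * ((b : ℝ) - 1))) ((b : ℝ) / (((k : ℝ) + 1) * ((b : ℝ) - 1))) := by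
  have hkb : k < b := by omega
  have hφ_pos : ∀ᶠ n in atTop, 1 ≤ φ n := hφ.tendsto_atTop.eventually_ge_atTop 1
  have herr : Tendsto (fun n ↦ 1 / (φ n : ℝ)) atTop (𝓝 0) :=
    tendsto_one_div_atTop_nhds_zero_nat.comp hφ.tendsto_atTop
  constructor
  · have hlim := hL.add herr
    rw [add_zero] at hlim
    refine ge_of_tendsto hlim ?_
    filter_upwards [hφ_pos] with n hn using le_leadingDigitFreq_add hk1 hkb hn
  · have hlim := herr.const_add ((b : ℝ) / ((k + 1) * (b - 1)))
    rw [add_zero] at hlim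
    refine le_of_tendsto_of_tendsto hL hlim ?_
    filter_upwards [hφ_pos] with n hn using leadingDigitFreq_le_add hk1 hkb hn
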